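/- Let x ∈ L²(Ω, ℝᵐ) and y ∈ L²(Ω, ℝⁿ) be random vectors with E[x] = 0 and E[y] = 0. The Wiener-type filter Ť given by Ť(y) = E_{xy} E_{yy}^† y, where E_{xy} = E[x yᵀ] and E_{yy} = E[y yᵀ], satisfies E[‖x − Ť(y)‖²] = tr(E_{xx}) − ‖E_{xy}(E_{yy}^{1/2})^†‖², where ‖·‖ on matrices is the Frobenius norm. -/

import Mathlib

/-! Put `C = E_{xy}`, `E = E_{yy}` and `A = C E^†`. Expanding the square gives
`E[‖x - A y‖²] = tr E_{xx} - 2 tr(C Aᵀ) + tr(A E Aᵀ)` (`integral_sq_error`). The pseudoinverse is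
unique (`IsMP.unique`), hence `E^†` is symmetric, and since `S^†` commutes with the
symmetric matrix `S = E^{1/2}`, the matrix `(S^†)²` satisfies the Penrose equations for `S² = E`;
thus `E^† = S^† (S^†)ᵀ`. As `E^† E E^† = E^†`, both traces involving `A` equal
`tr(C E^† Cᵀ) = ‖C S^†‖²`. -/

open MeasureTheory Matrix BigOperators

noncomputable def vmean {Ω : Type*} [MeasurableSpace Ω] {n : ℕ} (μ : Measure Ω)
    (g : Ω → Fin n → ℝ) : Fin n → ℝ :=
  fun i => ∫ ω, g ω i ∂μ

/-- Cross-covariance matrix `𝔼_{gh} = E[g hᵀ] - E[g] E[h]ᵀ`. -/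
noncomputable def cov {Ω : Type*} [MeasurableSpace Ω] {m n : ℕ} (μ : Measure Ω)
    (g : Ω → Fin m → ℝ) (h : Ω → Fin n → ℝ) : Matrix (Fin m) (Fin n) ℝ :=
  Matrix.of fun i j => (∫ ω, g ω i * h ω j ∂μ) - (∫ ω, g ω i ∂μ) * (∫ ω, h ω j ∂μ)

/-- `g ∈ L²(Ω, ℝⁿ)`: measurable with `E[‖g‖²] < ∞`. -/
def MemL2 {Ω : Type*} [MeasurableSpace Ω] {n : ℕ} (μ : Measure Ω)
    (g : Ω → Fin n → ℝ) : Prop :=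
  Measurable g ∧ Integrable (fun ω => ∑ i, (g ω i) ^ 2) μ

/-- `P` is the Moore–Penrose pseudoinverse of `M`. -/
def IsMP {m n : ℕ} (M : Matrix (Fin m) (Fin n) ℝ) (P : Matrix (Fin n) (Fin m) ℝ) : Prop :=
  M * P * M = M ∧ P * M * P = P ∧ (M * P)ᵀ = M * P ∧ (P * M)ᵀ = P * M

/-- Squared Frobenius norm `‖M‖² = tr (M Mᵀ)`. -/
noncomputable def sqFrob {m n : ℕ} (M : Matrix (Fin m) (Fin n) ℝ) : ℝ :=
  Matrix.trace (M * Mᵀ)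

/-- Raw (uncentered) second-moment matrix `E_{gh} = E[g hᵀ]` (for zero-mean vectors this
is the covariance matrix). -/
noncomputable def rcov {Ω : Type*} [MeasurableSpace Ω] {m n : ℕ} (μ : Measure Ω)
    (g : Ω → Fin m → ℝ) (h : Ω → Fin n → ℝ) : Matrix (Fin m) (Fin n) ℝ :=
  Matrix.of fun i j => ∫ ω, g ω i * h ω j ∂μ

theorem IsMP.unique {m n : ℕ} {M : Matrix (Fin m) (Fin n) ℝ} {P R : Matrix (Fin n) (Fin m) ℝ}
    (hP : IsMP M P) (hR : IsMP M R) : P = R := by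
  obtain ⟨p1, p2, p3, p4⟩ := hP
  obtain ⟨r1, r2, r3, r4⟩ := hR
  -- `M P` and `M R` are symmetric with `M P M R = M R` and `M R M P = M P`, so they agree.
  have h1 : M * P = M * R := by
    calc M * P = (M * R * M) * P := by rw [r1]
      _ = (M * R)ᵀ * (M * P)ᵀ := by rw [r3, p3]; simp only [Matrix.mul_assoc]
      _ = ((M * P * M) * R)ᵀ := by rw [← Matrix.transpose_mul]; simp only [Matrix.mul_assoc]
      _ = M * R := by rw [p1, r3]
  have h2 : P * M = R * M := by
    calc P * M = P * (M * R * M) := by rw [r1]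
      _ = (P * M)ᵀ * (R * M)ᵀ := by rw [r4, p4]; simp only [Matrix.mul_assoc]
      _ = (R * (M * P * M))ᵀ := by rw [← Matrix.transpose_mul]; simp only [Matrix.mul_assoc]
      _ = R * M := by rw [p1, r4]
  calc P = P * M * P := p2.symm
    _ = R * (M * P) := by rw [h2, Matrix.mul_assoc]
    _ = R * M * R := by rw [h1, Matrix.mul_assoc]
    _ = R := r2

theorem IsMP.transpose {m n : ℕ} {M : Matrix (Fin m) (Fin n) ℝ} {P : Matrix (Fin n) (Fin m) ℝ}
    (hP : IsMP M P) : IsMP Mᵀ Pᵀ := by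
  obtain ⟨p1, p2, p3, p4⟩ := hP
  refine ⟨?_, ?_, ?_, ?_⟩
  · rw [← Matrix.transpose_mul, ← Matrix.transpose_mul, ← Matrix.mul_assoc, p1]
  · rw [← Matrix.transpose_mul, ← Matrix.transpose_mul, ← Matrix.mul_assoc, p2]
  · rw [← Matrix.transpose_mul, p4, p4]
  · rw [← Matrix.transpose_mul, p3, p3]

theorem IsMP.isSymm {n : ℕ} {M P : Matrix (Fin n) (Fin n) ℝ} (hM : Mᵀ = M)
    (hP : IsMP M P) : Pᵀ = P :=
  IsMP.unique (hM ▸ hP.transpose) hP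

theorem IsMP.mul_self {n : ℕ} {S Q : Matrix (Fin n) (Fin n) ℝ} (hS : Sᵀ = S)
    (hQ : IsMP S Q) : IsMP (S * S) (Q * Q) := by
  have hQs := hQ.isSymm hS
  obtain ⟨q1, q2, q3, q4⟩ := hQ
  have hc : S * Q = Q * S := by rw [← q3, Matrix.transpose_mul, hS, hQs]
  have h1 : S * S * (Q * Q) = S * Q := by
    calc S * S * (Q * Q) = S * (S * Q) * Q := by simp only [Matrix.mul_assoc]
      _ = (S * Q * S) * Q := by rw [Matrix.mul_assoc S Q S, ← hc]
      _ = S * Q := by rw [q1]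
  have h2 : Q * Q * (S * S) = Q * S := by
    calc Q * Q * (S * S) = Q * (Q * S) * S := by simp only [Matrix.mul_assoc]
      _ = (Q * S * Q) * S := by rw [Matrix.mul_assoc Q S Q, hc]
      _ = Q * S := by rw [q2]
  refine ⟨?_, ?_, ?_, ?_⟩
  · rw [h1, ← Matrix.mul_assoc, q1]
  · rw [h2, ← Matrix.mul_assoc, q2]
  · rw [h1, q3]
  · rw [h2, q4]

theorem MemL2.memLp {Ω : Type*} [MeasurableSpace Ω] {n : ℕ} {μ : Measure Ω}
    {g : Ω → Fin n → ℝ} (hg : MemL2 μ g) (i : Fin n) : MemLp (fun ω => g ω i) 2 μ := by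
  have hm : Measurable fun ω => g ω i := (measurable_pi_apply i).comp hg.1
  rw [memLp_two_iff_integrable_sq hm.aestronglyMeasurable]
  refine hg.2.mono' (hm.pow_const 2).aestronglyMeasurable (Filter.Eventually.of_forall fun ω => ?_)
  rw [Real.norm_of_nonneg (sq_nonneg _)]
  exact Finset.single_le_sum (f := fun i => (g ω i) ^ 2) (fun j _ => sq_nonneg _)
    (Finset.mem_univ i)

theorem MemL2.integrable_mul {Ω : Type*} [MeasurableSpace Ω] {m n : ℕ} {μ : Measure Ω}
    {g : Ω → Fin m → ℝ} {h : Ω → Fin n → ℝ} (hg : MemL2 μ g) (hh : MemL2 μ h)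
    (i : Fin m) (j : Fin n) : Integrable (fun ω => g ω i * h ω j) μ :=
  (hg.memLp i).integrable_mul (hh.memLp j)

/-- The mean square error of an arbitrary linear filter `A`, in terms of second moments. -/
theorem integral_sq_error {Ω : Type*} [MeasurableSpace Ω] (μ : Measure Ω)
    {m n : ℕ} (x : Ω → Fin m → ℝ) (y : Ω → Fin n → ℝ) (hx : MemL2 μ x) (hy : MemL2 μ y)
    (A : Matrix (Fin m) (Fin n) ℝ) :
    (∫ ω, ∑ i, (x ω i - A.mulVec (y ω) i) ^ 2 ∂μ)
      = Matrix.trace (rcov μ x x) - 2 * Matrix.trace (rcov μ x y * Aᵀ)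
        + Matrix.trace (A * rcov μ y y * Aᵀ) := by
  have hexp : ∀ ω, (∑ i, (x ω i - A.mulVec (y ω) i) ^ 2)
      = ∑ i, ((x ω i * x ω i - 2 * ∑ j, x ω i * y ω j * A i j)
        + ∑ k, ∑ j, A i j * (y ω j * y ω k) * A i k) := by
    intro ω
    refine Finset.sum_congr rfl fun i _ => ?_
    have e1 : ∑ j, x ω i * y ω j * A i j = x ω i * A.mulVec (y ω) i := by
      simp only [Matrix.mulVec, dotProduct, Finset.mul_sum]
      exact Finset.sum_congr rfl fun j _ => by ring
    have e2 : ∑ k, ∑ j, A i j * (y ω j * y ω k) * A i k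
        = A.mulVec (y ω) i * A.mulVec (y ω) i := by
      simp only [Matrix.mulVec, dotProduct, Finset.mul_sum, Finset.sum_mul]
      exact Finset.sum_congr rfl fun k _ => Finset.sum_congr rfl fun j _ => by ring
    rw [e1, e2]; ring
  have i1 : ∀ i, Integrable (fun ω => x ω i * x ω i) μ := fun i => hx.integrable_mul hx i i
  have i2 : ∀ i j, Integrable (fun ω => x ω i * y ω j * A i j) μ :=
    fun i j => (hx.integrable_mul hy i j).mul_const _
  have i2' : ∀ i, Integrable (fun ω => 2 * ∑ j, x ω i * y ω j * A i j) μ :=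
    fun i => (integrable_finsetSum _ fun j _ => i2 i j).const_mul 2
  have i3 : ∀ i k j, Integrable (fun ω => A i j * (y ω j * y ω k) * A i k) μ :=
    fun i k j => ((hy.integrable_mul hy j k).const_mul _).mul_const _
  have i3' : ∀ i k, Integrable (fun ω => ∑ j, A i j * (y ω j * y ω k) * A i k) μ :=
    fun i k => integrable_finsetSum _ fun j _ => i3 i k j
  have i3'' : ∀ i, Integrable (fun ω => ∑ k, ∑ j, A i j * (y ω j * y ω k) * A i k) μ :=
    fun i => integrable_finsetSum _ fun k _ => i3' i k
  have i4 : ∀ i, Integrable (fun ω => x ω i * x ω i - 2 * ∑ j, x ω i * y ω j * A i j) μ :=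
    fun i => (i1 i).sub (i2' i)
  have i5 : ∀ i, Integrable (fun ω => (x ω i * x ω i - 2 * ∑ j, x ω i * y ω j * A i j)
      + ∑ k, ∑ j, A i j * (y ω j * y ω k) * A i k) μ :=
    fun i => (i4 i).add (i3'' i)
  have hi : ∀ i, ∫ ω, ((x ω i * x ω i - 2 * ∑ j, x ω i * y ω j * A i j)
        + ∑ k, ∑ j, A i j * (y ω j * y ω k) * A i k) ∂μ
      = (rcov μ x x i i - 2 * (rcov μ x y * Aᵀ) i i) + (A * rcov μ y y * Aᵀ) i i := by
    intro i
    rw [integral_add (i4 i) (i3'' i), integral_sub (i1 i) (i2' i),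
      integral_const_mul, integral_finsetSum _ fun j _ => i2 i j,
      integral_finsetSum _ fun k _ => i3' i k]
    simp only [integral_finsetSum _ fun j _ => i3 i _ j, integral_mul_const, integral_const_mul,
      Matrix.mul_apply, rcov, Matrix.of_apply, Matrix.transpose_apply, Finset.sum_mul]
  simp only [hexp]
  rw [integral_finsetSum _ fun i _ => i5 i]
  simp only [hi]
  simp only [Matrix.trace, Matrix.diag_apply, Finset.sum_add_distrib, Finset.sum_sub_distrib,
    Finset.mul_sum]

theorem wiener_filter_error
    {Ω : Type*} [MeasurableSpace Ω] (μ : Measure Ω) [IsProbabilityMeasure μ]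
    {m n : ℕ} (x : Ω → Fin m → ℝ) (y : Ω → Fin n → ℝ)
    (hx : MemL2 μ x) (hy : MemL2 μ y)
    (hx0 : vmean μ x = 0) (hy0 : vmean μ y = 0)
    (P : Matrix (Fin n) (Fin n) ℝ) (hP : IsMP (rcov μ y y) P)
    (S : Matrix (Fin n) (Fin n) ℝ) (hSpsd : S.PosSemidef) (hSsq : S * S = rcov μ y y)
    (Q : Matrix (Fin n) (Fin n) ℝ) (hQ : IsMP S Q) :
    (∫ ω, ∑ i, (x ω i - (rcov μ x y * P).mulVec (y ω) i) ^ 2 ∂μ)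
      = Matrix.trace (rcov μ x x) - sqFrob (rcov μ x y * Q) := by
  have hS : Sᵀ = S := by
    have h := hSpsd.isHermitian.eq
    rwa [Matrix.conjTranspose_eq_transpose_of_trivial] at h
  have hE : (rcov μ y y)ᵀ = rcov μ y y := by rw [← hSsq, Matrix.transpose_mul, hS]
  have hPQ : P = Q * Q := hP.unique (hSsq ▸ hQ.mul_self hS)
  have hPs : Pᵀ = P := hP.isSymm hE
  have hQs : Qᵀ = Q := hQ.isSymm hS
  rw [integral_sq_error μ x y hx hy]
  have h1 : rcov μ x y * (rcov μ x y * P)ᵀ = rcov μ x y * P * (rcov μ x y)ᵀ := by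
    rw [Matrix.transpose_mul, hPs, Matrix.mul_assoc]
  have h2 : rcov μ x y * P * rcov μ y y * (rcov μ x y * P)ᵀ
      = rcov μ x y * P * (rcov μ x y)ᵀ := by
    calc rcov μ x y * P * rcov μ y y * (rcov μ x y * P)ᵀ
        = rcov μ x y * (P * rcov μ y y * P) * (rcov μ x y)ᵀ := by
          rw [Matrix.transpose_mul, hPs]; simp only [Matrix.mul_assoc]
      _ = _ := by rw [hP.2.1]
  have h3 : rcov μ x y * Q * (rcov μ x y * Q)ᵀ = rcov μ x y * P * (rcov μ x y)ᵀ := by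
    rw [Matrix.transpose_mul, hQs, hPQ]; simp only [Matrix.mul_assoc]
  rw [sqFrob, h1, h2, h3]
  ring
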